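/- arXiv:1607.08816 — 2 statements merged into one kernel-verified Lean document; each statement's English description precedes it below -/
import Mathlib

section
/- With the data (Λ, ⟨·,·⟩, Ṽ) and the Lie ring L as in the context, there is a unique additive map σ : L → L with σ(λ) = −λ for all λ ∈ Λ^∨ and σ(X_γ̃) = −X_{γ̃^{−1}} for all γ̃ ∈ Γ̃, and σ is a Lie ring automorphism of L with σ ∘ σ = id (a Lie algebra involution). -/
/-!
`L` is generated as an abelian group by `Λ^∨` and the symbols `X_γ̃`, so an additive map is
determined by its values there, and bilinear identities need only be checked there
(`hom_eq_of_generators`). Existence of `σ` holds because `γ̃ ↦ γ̃⁻¹` commutes with `γ̃ ↦ −γ̃`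
(as `ε` is central of order two), so `X_γ̃ ↦ −X_{γ̃⁻¹}` respects the relations of `L'`.

The only case of the homomorphism property that uses the quadratic condition `ṽ² = (−1)^{q(v)}` is
`γ + γ' ∈ Γ`: one needs `−X_{(γ̃γ̃')⁻¹} = X_{γ̃⁻¹γ̃'⁻¹}`, i.e. `γ̃⁻¹γ̃'⁻¹ = ε (γ̃γ̃')⁻¹`. This holds
since `γ̃`, `γ̃'` and `γ̃γ̃'` all lie over roots and hence have `Ṽ`-component of square `ε`
(`inv_mul_inv_eq`).
-/


open scoped TensorProduct Classical

namespace Lurie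

variable (Λ : Type) [AddCommGroup Λ]

/-- The subgroup `2Λ ⊆ Λ`, as a `ℤ`-submodule. -/
def twoLambda : Submodule ℤ Λ := LinearMap.range ((2 : ℤ) • (LinearMap.id : Λ →ₗ[ℤ] Λ))

/-- `V = Λ/2Λ`. -/
abbrev ModTwo := Λ ⧸ twoLambda Λ

/-- The quotient map `Λ → Λ/2Λ`. -/
def mk2 : Λ →ₗ[ℤ] ModTwo Λ := (twoLambda Λ).mkQ

variable (Vt : Type) [Group Vt]
variable (B : Λ →ₗ[ℤ] Λ →ₗ[ℤ] ℤ) (p : Vt → ModTwo Λ) (ε : Vt)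

/-- The hypotheses on the data `(Λ, ⟨·,·⟩, Ṽ)`: the bilinear form `B = ⟨·,·⟩` is
symmetric, positive definite and even, and its roots `Γ = {γ | ⟨γ,γ⟩ = 2}` generate `Λ`;
`p : Ṽ → V = Λ/2Λ` is a surjective group homomorphism whose kernel is the central
subgroup `{1, ε}` of order 2 (so `Ṽ` is a central extension of `V` by `{±1}`, with
`ε` playing the role of `−1`), and every `ṽ ∈ Ṽ` lying over `v ∈ V` satisfies
`ṽ² = (−1)^{q(v)}`, where `q(λ) = ⟨λ,λ⟩/2`. -/
def LurieData : Prop :=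
  (∀ x y : Λ, B x y = B y x) ∧
  (∀ x : Λ, x ≠ 0 → 0 < B x x) ∧
  (∀ x : Λ, 2 ∣ B x x) ∧
  Submodule.span ℤ {γ : Λ | B γ γ = 2} = ⊤ ∧
  (∀ a b : Vt, p (a * b) = p a + p b) ∧
  Function.Surjective p ∧
  (∀ v : Vt, p v = 0 ↔ v = 1 ∨ v = ε) ∧
  (∀ g : Vt, ε * g = g * ε) ∧
  ε ≠ 1 ∧ ε ^ 2 = 1 ∧
  (∀ (v : Vt) (l : Λ), p v = mk2 Λ l → v ^ 2 = ε ^ (B l l / 2))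

/-- The set `Γ̃` of elements of the fibre product `Λ̃ = Λ ×_V Ṽ` lying over roots
`γ ∈ Γ` of `Λ` (the group structure of `Λ̃` is componentwise, and is referred to below
via the underlying pairs). -/
def Rt : Type := {x : Λ × Vt // p x.2 = mk2 Λ x.1 ∧ B x.1 x.1 = 2}

/-- The subgroup of relations `X_{−γ̃} + X_{γ̃}` in the free abelian group on `Γ̃`;
here `−γ̃ = (−1)·γ̃` has underlying pair `(γ, ε·ṽ)` when `γ̃` has underlying pair `(γ, ṽ)`. -/
def negRel : AddSubgroup (FreeAbelianGroup (Rt Λ Vt B p)) :=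
  AddSubgroup.closure {z | ∃ a b : Rt Λ Vt B p,
    b.val.1 = a.val.1 ∧ b.val.2 = ε * a.val.2 ∧
    z = FreeAbelianGroup.of a + FreeAbelianGroup.of b}

/-- `L'`: the free abelian group on the symbols `X_γ̃`, `γ̃ ∈ Γ̃`, modulo the relations
`X_{−γ̃} = −X_γ̃`. -/
abbrev Lp := FreeAbelianGroup (Rt Λ Vt B p) ⧸ negRel Λ Vt B p ε

/-- Lurie's `L = Λ^∨ ⊕ L'`. -/
abbrev LL := Module.Dual ℤ Λ × Lp Λ Vt B p ε

/-- The inclusion `Λ^∨ → L`. -/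
def iota (f : Module.Dual ℤ Λ) : LL Λ Vt B p ε := (f, 0)

/-- The generator `X_γ̃ ∈ L` for `γ̃ ∈ Γ̃`. -/
def XX (a : Rt Λ Vt B p) : LL Λ Vt B p ε :=
  (0, QuotientAddGroup.mk (FreeAbelianGroup.of a))

/-- The defining identities of Lurie's bracket on `L = Λ^∨ ⊕ L'`:
`[λ, λ'] = 0`; `[λ, X_γ̃] = −[X_γ̃, λ] = λ(γ) X_γ̃`; `[X_γ̃, X_γ̃'] = X_{γ̃γ̃'}` if
`γ + γ' ∈ Γ`; `[X_γ̃, X_γ̃'] = ε_{γ̃γ̃'} H_γ` if `γ + γ' = 0` (where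
`ε_{γ̃γ̃'} = γ̃γ̃' ∈ {±1}` and `H_γ = ⟨γ,·⟩ ∈ Λ^∨`); and `[X_γ̃, X_γ̃'] = 0` otherwise. -/
def IsLurieBracket (br : LL Λ Vt B p ε →+ LL Λ Vt B p ε →+ LL Λ Vt B p ε) : Prop :=
  (∀ f g : Module.Dual ℤ Λ, br (iota Λ Vt B p ε f) (iota Λ Vt B p ε g) = 0) ∧
  (∀ (f : Module.Dual ℤ Λ) (a : Rt Λ Vt B p),
    br (iota Λ Vt B p ε f) (XX Λ Vt B p ε a) = f a.val.1 • XX Λ Vt B p ε a) ∧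
  (∀ (f : Module.Dual ℤ Λ) (a : Rt Λ Vt B p),
    br (XX Λ Vt B p ε a) (iota Λ Vt B p ε f) = -(f a.val.1 • XX Λ Vt B p ε a)) ∧
  (∀ a b c : Rt Λ Vt B p, c.val.1 = a.val.1 + b.val.1 → c.val.2 = a.val.2 * b.val.2 →
    br (XX Λ Vt B p ε a) (XX Λ Vt B p ε b) = XX Λ Vt B p ε c) ∧
  (∀ a b : Rt Λ Vt B p, a.val.1 + b.val.1 = 0 →
    br (XX Λ Vt B p ε a) (XX Λ Vt B p ε b) =
      (if a.val.2 * b.val.2 = 1 then (1 : ℤ) else -1) • iota Λ Vt B p ε (B a.val.1)) ∧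
  (∀ a b : Rt Λ Vt B p, a.val.1 + b.val.1 ≠ 0 →
    B (a.val.1 + b.val.1) (a.val.1 + b.val.1) ≠ 2 →
    br (XX Λ Vt B p ε a) (XX Λ Vt B p ε b) = 0)


/-- The defining values of the involution `σ` of `L`: `σ(λ) = −λ` for `λ ∈ Λ^∨` and
`σ(X_γ̃) = −X_{γ̃⁻¹}`; here `γ̃⁻¹` has underlying pair `(−γ, ṽ⁻¹)` when `γ̃` has
underlying pair `(γ, ṽ)`. -/
def IsLurieSigma (σ : LL Λ Vt B p ε →+ LL Λ Vt B p ε) : Prop :=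
  (∀ f : Module.Dual ℤ Λ, σ (iota Λ Vt B p ε f) = -iota Λ Vt B p ε f) ∧
  (∀ a b : Rt Λ Vt B p, b.val.1 = -a.val.1 → b.val.2 = a.val.2⁻¹ →
    σ (XX Λ Vt B p ε a) = -XX Λ Vt B p ε b)

section Helpers

variable {Λ : Type} [AddCommGroup Λ] {Vt : Type} [Group Vt]
  {B : Λ →ₗ[ℤ] Λ →ₗ[ℤ] ℤ} {p : Vt → ModTwo Λ} {ε : Vt}

/-- The generators `λ ∈ Λ^∨` and `X_γ̃` determine an additive map out of `L`. -/
theorem hom_eq_of_generators {M : Type} [AddCommGroup M] {φ ψ : LL Λ Vt B p ε →+ M}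
    (h1 : ∀ f, φ (iota Λ Vt B p ε f) = ψ (iota Λ Vt B p ε f))
    (h2 : ∀ a, φ (XX Λ Vt B p ε a) = ψ (XX Λ Vt B p ε a)) : φ = ψ := by
  have hq : φ.comp (AddMonoidHom.inr _ _) = ψ.comp (AddMonoidHom.inr _ _) := by
    apply QuotientAddGroup.addMonoidHom_ext
    apply FreeAbelianGroup.lift_ext
    intro a
    exact h2 a
  ext x
  obtain ⟨f, y⟩ := x
  have hx : ((f, y) : LL Λ Vt B p ε) = iota Λ Vt B p ε f + AddMonoidHom.inr _ _ y := by
    simp [iota]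
  rw [hx, map_add, map_add, h1]
  congr 1
  exact DFunLike.congr_fun hq y

theorem p_inv (hp : ∀ a b : Vt, p (a * b) = p a + p b) (v : Vt) : p v⁻¹ = -p v := by
  have h1 : p 1 = 0 := by simpa using hp 1 1
  have h2 := hp v⁻¹ v
  rw [inv_mul_cancel, h1] at h2
  exact eq_neg_of_add_eq_zero_left h2.symm

/-- The inverse `γ̃⁻¹` of `γ̃ ∈ Γ̃` in `Λ̃ = Λ ×_V Ṽ`. -/
def rtInv (hp : ∀ a b : Vt, p (a * b) = p a + p b) (a : Rt Λ Vt B p) : Rt Λ Vt B p :=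
  ⟨(-a.val.1, a.val.2⁻¹), by
    refine ⟨?_, ?_⟩
    · simp only [map_neg, p_inv hp, a.property.1]
    · simpa using a.property.2⟩

/-- The relation `X_{−γ̃} = −X_γ̃`. -/
theorem XX_eq_neg {a b : Rt Λ Vt B p} (h1 : b.val.1 = a.val.1) (h2 : b.val.2 = ε * a.val.2) :
    XX Λ Vt B p ε b = -XX Λ Vt B p ε a := by
  have h : (QuotientAddGroup.mk (FreeAbelianGroup.of a + FreeAbelianGroup.of b) :
      Lp Λ Vt B p ε) = 0 :=
    (QuotientAddGroup.eq_zero_iff _).2 (AddSubgroup.subset_closure ⟨a, b, h1, h2, rfl⟩)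
  rw [QuotientAddGroup.mk_add] at h
  refine Prod.ext ?_ ?_
  · simp [XX]
  · exact eq_neg_of_add_eq_zero_right h

/-- Two elements of square `ε` whose product has square `ε` anticommute; as their inverses are
`ε` times themselves, this gives `v⁻¹ w⁻¹ = ε (v w)⁻¹`. -/
theorem inv_mul_inv_eq {v w : Vt} (hε : ε ^ 2 = 1) (hc : ∀ g : Vt, ε * g = g * ε)
    (hv : v ^ 2 = ε) (hw : w ^ 2 = ε) (hvw : (v * w) ^ 2 = ε) :
    v⁻¹ * w⁻¹ = ε * (v * w)⁻¹ := by
  have hv' : v⁻¹ = ε * v := by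
    rw [inv_eq_iff_mul_eq_one, ← mul_assoc, ← hc v, mul_assoc, ← pow_two, hv, ← pow_two, hε]
  have hw' : w⁻¹ = ε * w := by
    rw [inv_eq_iff_mul_eq_one, ← mul_assoc, ← hc w, mul_assoc, ← pow_two, hw, ← pow_two, hε]
  rw [eq_mul_inv_iff_mul_eq, hv', hw']
  calc ε * v * (ε * w) * (v * w) = ε * (v * ε) * w * (v * w) := by group
    _ = ε ^ 2 * (v * w) ^ 2 := by rw [← hc v]; simp only [pow_two, mul_assoc]
    _ = ε := by rw [hε, hvw, one_mul]

/-- The additive map `L' → L`, `X_γ̃ ↦ −X_{γ̃⁻¹}`. -/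
noncomputable def sigmaP (hp : ∀ a b : Vt, p (a * b) = p a + p b) (hε : ε ^ 2 = 1)
    (hc : ∀ g : Vt, ε * g = g * ε) : Lp Λ Vt B p ε →+ LL Λ Vt B p ε :=
  QuotientAddGroup.lift (negRel Λ Vt B p ε)
    (FreeAbelianGroup.lift fun a => -XX Λ Vt B p ε (rtInv hp a)) (by
      refine (AddSubgroup.closure_le _).2 ?_
      rintro _ ⟨a, b, h1, h2, rfl⟩
      have h : XX Λ Vt B p ε (rtInv hp b) = -XX Λ Vt B p ε (rtInv hp a) := by
        apply XX_eq_neg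
        · simp [rtInv, h1]
        · simp only [rtInv, h2, mul_inv_rev]
          rw [hc, inv_eq_of_mul_eq_one_left (show ε * ε = 1 by rw [← pow_two, hε])]
      simp [AddMonoidHom.mem_ker, h])

theorem exists_sigma (hp : ∀ a b : Vt, p (a * b) = p a + p b) (hε : ε ^ 2 = 1)
    (hc : ∀ g : Vt, ε * g = g * ε) :
    ∃ σ : LL Λ Vt B p ε →+ LL Λ Vt B p ε, IsLurieSigma Λ Vt B p ε σ := by
  refine ⟨(-AddMonoidHom.inl _ _).coprod (sigmaP hp hε hc), ?_, ?_⟩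
  · intro f
    simp [iota]
  · intro a b h1 h2
    have hb : b = rtInv hp a := Subtype.ext (Prod.ext h1 h2)
    subst hb
    simp [XX, sigmaP]

end Helpers

/-- There is a unique additive map `σ : L → L` with `σ(λ) = −λ` for all `λ ∈ Λ^∨` and
`σ(X_γ̃) = −X_{γ̃⁻¹}` for all `γ̃ ∈ Γ̃`, and `σ` is a Lie ring automorphism of `L` with
`σ ∘ σ = id` (a Lie algebra involution). -/
theorem existsUnique_lurieSigma
    (Λ : Type) [AddCommGroup Λ] [Module.Free ℤ Λ] [Module.Finite ℤ Λ]
    (Vt : Type) [Group Vt]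
    (B : Λ →ₗ[ℤ] Λ →ₗ[ℤ] ℤ) (p : Vt → ModTwo Λ) (ε : Vt)
    (hdata : LurieData Λ Vt B p ε)
    (br : LL Λ Vt B p ε →+ LL Λ Vt B p ε →+ LL Λ Vt B p ε)
    (hbr : IsLurieBracket Λ Vt B p ε br) :
    (∃! σ : LL Λ Vt B p ε →+ LL Λ Vt B p ε, IsLurieSigma Λ Vt B p ε σ) ∧
    (∀ σ : LL Λ Vt B p ε →+ LL Λ Vt B p ε, IsLurieSigma Λ Vt B p ε σ →
      (∀ x y : LL Λ Vt B p ε, σ (br x y) = br (σ x) (σ y)) ∧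
      (∀ x : LL Λ Vt B p ε, σ (σ x) = x)) := by
  obtain ⟨-, -, -, -, hp, -, -, hc, -, hε, hsq⟩ := hdata
  obtain ⟨b1, b2, b3, b4, b5, b6⟩ := hbr
  refine ⟨?_, ?_⟩
  · obtain ⟨σ, hσ⟩ := exists_sigma (B := B) hp hε hc
    refine ⟨σ, hσ, fun τ hτ => hom_eq_of_generators ?_ ?_⟩
    · intro f
      rw [hσ.1, hτ.1]
    · intro a
      rw [hσ.2 a (rtInv hp a) rfl rfl, hτ.2 a (rtInv hp a) rfl rfl]
  · rintro σ ⟨s1, s2⟩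
    have sX : ∀ a, σ (XX Λ Vt B p ε a) = -XX Λ Vt B p ε (rtInv hp a) :=
      fun a => s2 a _ rfl rfl
    have hval : ∀ a : Rt Λ Vt B p, (rtInv hp a).val.1 = -a.val.1 := fun _ => rfl
    have hsq' : ∀ (v : Vt) (l : Λ), p v = mk2 Λ l → B l l = 2 → v ^ 2 = ε := by
      intro v l h1 h2
      simpa [h2] using hsq v l h1
    have key : ∀ a b, σ (br (XX Λ Vt B p ε a) (XX Λ Vt B p ε b)) =
        br (XX Λ Vt B p ε (rtInv hp a)) (XX Λ Vt B p ε (rtInv hp b)) := by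
      intro a b
      have hneg : (rtInv hp a).val.1 + (rtInv hp b).val.1 = -(a.val.1 + b.val.1) := by
        simp only [rtInv]
        abel
      by_cases h0 : a.val.1 + b.val.1 = 0
      · -- opposite roots: `γ̃⁻¹γ̃'⁻¹` and `γ̃γ̃'` have the same sign, and `H_{−γ} = −H_γ`
        rw [b5 a b h0, b5 _ _ (by rw [hneg, h0, neg_zero]), map_zsmul, s1]
        have hiff : (rtInv hp a).val.2 * (rtInv hp b).val.2 = 1 ↔ a.val.2 * b.val.2 = 1 := by
          simp only [rtInv]
          rw [← mul_inv_rev, inv_eq_one, mul_eq_one_iff_eq_inv, mul_eq_one_iff_inv_eq, eq_comm]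
        have hH : iota Λ Vt B p ε (B (rtInv hp a).val.1) = -iota Λ Vt B p ε (B a.val.1) := by
          simp [rtInv, iota]
        simp only [hiff, hH]
      · by_cases h2 : B (a.val.1 + b.val.1) (a.val.1 + b.val.1) = 2
        · have hpc : p (a.val.2 * b.val.2) = mk2 Λ (a.val.1 + b.val.1) := by
            rw [hp, map_add, a.property.1, b.property.1]
          have hpd : p ((rtInv hp a).val.2 * (rtInv hp b).val.2) =
              mk2 Λ ((rtInv hp a).val.1 + (rtInv hp b).val.1) := by
            rw [hp, map_add, (rtInv hp a).property.1, (rtInv hp b).property.1]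
          let c : Rt Λ Vt B p := ⟨(a.val.1 + b.val.1, a.val.2 * b.val.2), hpc, h2⟩
          let d : Rt Λ Vt B p :=
            ⟨((rtInv hp a).val.1 + (rtInv hp b).val.1,
              (rtInv hp a).val.2 * (rtInv hp b).val.2), hpd, by
                simp only [hneg, map_neg, LinearMap.neg_apply, neg_neg]
                exact h2⟩
          rw [b4 a b c rfl rfl, b4 _ _ d rfl rfl, sX]
          symm
          apply XX_eq_neg
          · exact hneg
          · exact inv_mul_inv_eq hε hc (hsq' _ _ a.property.1 a.property.2)
              (hsq' _ _ b.property.1 b.property.2) (hsq' _ _ hpc h2)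
        · rw [b6 a b h0 h2, map_zero, b6]
          · rw [hneg]
            exact neg_ne_zero.2 h0
          · simpa only [hneg, map_neg, LinearMap.neg_apply, neg_neg] using h2
    refine ⟨?_, ?_⟩
    · have hmain : (AddMonoidHom.compHom σ).comp br =
          (AddMonoidHom.compHom.flip σ).comp (br.comp σ) := by
        apply hom_eq_of_generators
        · intro f
          apply hom_eq_of_generators
          · intro g
            simp [s1, b1]
          · intro a
            simp [s1, sX, b2, hval]
        · intro a
          apply hom_eq_of_generators
          · intro g
            simp [s1, sX, b3, hval]
          · intro b
            simp [sX, key]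
      intro x y
      exact DFunLike.congr_fun (DFunLike.congr_fun hmain x) y
    · have hinv : σ.comp σ = AddMonoidHom.id _ := by
        apply hom_eq_of_generators
        · intro f
          simp [s1]
        · intro a
          have haa : rtInv hp (rtInv hp a) = a :=
            Subtype.ext (Prod.ext (neg_neg _) (inv_inv _))
          simp [sX, haa]
      exact fun x => DFunLike.congr_fun hinv x


end Lurie
end

section
/- With the data (Λ, ⟨·,·⟩, Ṽ), the Lie ring L, and the involution σ of L as in the context, let k be a field of characteristic 0, let 𝔤 = {x ∈ L ⊗_ℤ k : σ(x) = x} be the fixed-point subalgebra, let W be a finite-dimensional k-vector space, and let ρ : Ṽ → GL(W) be a group homomorphism with ρ(−1) = −id_W. Let π : Λ̃ → Ṽ denote the projection Λ ×_V Ṽ → Ṽ. Then there exists a Lie algebra homomorphism R : 𝔤 → 𝔤𝔩(W) satisfying R(Z_γ̃) = ρ(π(γ̃))/2 for every γ̃ ∈ Γ̃, where Z_γ̃ = X_γ̃ + X_{−γ̃^{−1}}. -/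
/-!
Each generator `X_γ̃` is sent to `ρ(π γ̃)/4` and `Λ^∨` to `0`. This respects `X_{-γ̃} = -X_γ̃`
because `ρ ε = -1`, so it defines a `k`-linear map `T` (`repK`) on all of `L ⊗ k`. The map `T` is
not a Lie homomorphism there, but its restriction `R` to the fixed points of `σ` is one.

The fixed points are spanned by the elements `x + σ x`, that is by the `Z_γ̃ = X_γ̃ + X_{γ̃'}` where
`γ̃' = -γ̃⁻¹` lies over `-γ` and has the *same* component in `Ṽ` as `γ̃`, since `ṽ² = ε`.
In particular `T Z_γ̃ = ρ(π γ̃)/2`.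

For roots `α, β` lifted by `u, v ∈ Ṽ`, put `n = ⟨α, β⟩`, so `-2 ≤ n ≤ 2`. By `repInt_br`,
`T [X, X'] = ρ(u v)/4` if `n = -1`, and `0` otherwise. Adding the four brackets in
`[Z, Z']` gives `ρ(u v)/2` if `n = ±1` and `0` otherwise. On the other side,
`u v = ε ^ n v u` gives the same value for the commutator `(ρ u ρ v - ρ v ρ u)/4`.
-/


open scoped TensorProduct Classical

namespace Lurie

variable (Λ : Type) [AddCommGroup Λ]

variable (Vt : Type) [Group Vt]
variable (B : Λ →ₗ[ℤ] Λ →ₗ[ℤ] ℤ) (p : Vt → ModTwo Λ) (ε : Vt)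

section Roots

variable {Λ Vt B p ε}

/-- Cauchy–Schwarz for two roots, with its equality cases. -/
theorem root_pairing (hd : LurieData Λ Vt B p ε) {x y : Λ} (hx : B x x = 2) (hy : B y y = 2) :
    (B x y = -2 ∧ x + y = 0) ∨ (B x y = 2 ∧ x = y) ∨ B x y = -1 ∨ B x y = 0 ∨ B x y = 1 := by
  obtain ⟨hs, hpos, -⟩ := hd
  have h1 := hpos (x + y)
  have h2 := hpos (x - y)
  have hyx := hs y x
  simp only [map_add, map_sub, LinearMap.add_apply, LinearMap.sub_apply, hyx, hx, hy] at h1 h2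
  by_cases e1 : x + y = 0
  · left
    have hyx' : y = -x := (neg_eq_of_add_eq_zero_right e1).symm
    refine ⟨?_, e1⟩
    rw [hyx', map_neg, hx]
  by_cases e2 : x = y
  · right; left
    refine ⟨?_, e2⟩
    rw [← e2, hx]
  have h1 := h1 e1
  have h2 := h2 (sub_ne_zero.mpr e2)
  omega

theorem norm_add (hd : LurieData Λ Vt B p ε) {x y : Λ} (hx : B x x = 2) (hy : B y y = 2) :
    B (x + y) (x + y) = 4 + 2 * B x y := by
  have hyx := hd.1 y x
  simp only [map_add, LinearMap.add_apply, hyx, hx, hy]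
  ring

theorem mk2_neg (x : Λ) : mk2 Λ (-x) = mk2 Λ x := by
  unfold mk2
  rw [Submodule.mkQ_apply, Submodule.mkQ_apply, Submodule.Quotient.eq]
  exact ⟨-x, by simp [two_smul, sub_eq_add_neg]⟩

theorem p_eps (hd : LurieData Λ Vt B p ε) : p ε = 0 :=
  (hd.2.2.2.2.2.2.1 ε).2 (Or.inr rfl)

theorem sq_eq_eps (hd : LurieData Λ Vt B p ε) (a : Rt Λ Vt B p) : a.val.2 * a.val.2 = ε := by
  have h := hd.2.2.2.2.2.2.2.2.2.2 a.val.2 a.val.1 a.property.1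
  rw [a.property.2] at h
  simpa [pow_two] using h

theorem eps_mul_inv (hd : LurieData Λ Vt B p ε) (a : Rt Λ Vt B p) :
    ε * a.val.2⁻¹ = a.val.2 := by
  rw [← sq_eq_eps hd a, mul_inv_cancel_right]

/-- The element `-γ̃⁻¹` of `Γ̃`: it lies over `-γ` and has the same component in `Ṽ` as `γ̃`. -/
def dual (a : Rt Λ Vt B p) : Rt Λ Vt B p :=
  ⟨(-a.val.1, a.val.2), by
    refine ⟨?_, ?_⟩
    · rw [mk2_neg]; exact a.property.1
    · simpa using a.property.2⟩

/-- The inverse of `γ̃` in `Λ̃`, as an element of `Γ̃`. -/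
def inv (hd : LurieData Λ Vt B p ε) (a : Rt Λ Vt B p) : Rt Λ Vt B p :=
  ⟨(-a.val.1, a.val.2⁻¹), by
    have h := hd.2.2.2.2.1 ε a.val.2⁻¹
    rw [eps_mul_inv hd a, p_eps hd, zero_add] at h
    refine ⟨?_, ?_⟩
    · rw [mk2_neg, ← h]; exact a.property.1
    · simpa using a.property.2⟩

theorem XX_inv (hd : LurieData Λ Vt B p ε) (a : Rt Λ Vt B p) :
    XX Λ Vt B p ε (inv hd a) = -XX Λ Vt B p ε (dual a) := by
  rw [eq_neg_iff_add_eq_zero]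
  refine Prod.ext (by simp [XX]) ?_
  change ((FreeAbelianGroup.of (inv hd a) + FreeAbelianGroup.of (dual a) :
    FreeAbelianGroup (Rt Λ Vt B p)) : Lp Λ Vt B p ε) = 0
  rw [QuotientAddGroup.eq_zero_iff]
  exact AddSubgroup.subset_closure
    ⟨inv hd a, dual a, rfl, (eps_mul_inv hd a).symm, rfl⟩

/-- The commutation rule `u v = ε ^ ⟨α, β⟩ v u` in `Ṽ`, in its squared form. -/
theorem mul_sq (hd : LurieData Λ Vt B p ε) (a b : Rt Λ Vt B p) :
    (a.val.2 * b.val.2) ^ 2 = ε ^ (2 + B a.val.1 b.val.1) := by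
  have h := hd.2.2.2.2.2.2.2.2.2.2 (a.val.2 * b.val.2) (a.val.1 + b.val.1)
    (by rw [hd.2.2.2.2.1, map_add, a.property.1, b.property.1])
  rw [norm_add hd a.property.2 b.property.2] at h
  rw [h]
  congr 1
  omega

end Roots

section Rep

variable {Λ Vt B p ε}
variable {k : Type} [Field k] {W : Type} [AddCommGroup W] [Module k W]

theorem rho_eps_mul {ρ : Vt →* (Module.End k W)ˣ} (hρ : ρ ε = -1) (v : Vt) :
    ((ρ (ε * v) : (Module.End k W)ˣ) : Module.End k W) = -(ρ v : (Module.End k W)ˣ) := by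
  simp [hρ]

/-- The additive map `L → 𝔤𝔩(W)` with `X_γ̃ ↦ ρ(π γ̃)/4` that vanishes on `Λ^∨`. -/
noncomputable def repInt (ρ : Vt →* (Module.End k W)ˣ) (hρ : ρ ε = -1) :
    LL Λ Vt B p ε →+ Module.End k W :=
  (QuotientAddGroup.lift (negRel Λ Vt B p ε)
    (FreeAbelianGroup.lift fun a : Rt Λ Vt B p =>
      (4 : k)⁻¹ • ((ρ a.val.2 : (Module.End k W)ˣ) : Module.End k W))
    (by
      refine (AddSubgroup.closure_le _).2 ?_
      rintro _ ⟨a, b, -, h, rfl⟩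
      change FreeAbelianGroup.lift _ _ = 0
      rw [map_add, FreeAbelianGroup.lift_apply_of, FreeAbelianGroup.lift_apply_of, h,
        rho_eps_mul hρ, smul_neg, add_neg_cancel])).comp
    (AddMonoidHom.snd _ _)

theorem repInt_XX (ρ : Vt →* (Module.End k W)ˣ) (hρ : ρ ε = -1) (a : Rt Λ Vt B p) :
    repInt ρ hρ (XX Λ Vt B p ε a) =
      (4 : k)⁻¹ • ((ρ a.val.2 : (Module.End k W)ˣ) : Module.End k W) :=
  FreeAbelianGroup.lift_apply_of _ _

theorem repInt_iota (ρ : Vt →* (Module.End k W)ˣ) (hρ : ρ ε = -1) (f : Module.Dual ℤ Λ) :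
    repInt ρ hρ (iota Λ Vt B p ε f) = 0 := by
  simp [repInt, iota]

theorem repInt_br (hd : LurieData Λ Vt B p ε)
    {br : LL Λ Vt B p ε →+ LL Λ Vt B p ε →+ LL Λ Vt B p ε}
    (hbr : IsLurieBracket Λ Vt B p ε br)
    (ρ : Vt →* (Module.End k W)ˣ) (hρ : ρ ε = -1) (a b : Rt Λ Vt B p) :
    repInt ρ hρ (br (XX Λ Vt B p ε a) (XX Λ Vt B p ε b)) =
      if B a.val.1 b.val.1 = -1 then
        (4 : k)⁻¹ • ((ρ (a.val.2 * b.val.2) : (Module.End k W)ˣ) : Module.End k W)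
      else 0 := by
  obtain ⟨-, -, -, hsum, hzero, hother⟩ := hbr
  have hn := norm_add hd a.property.2 b.property.2
  split_ifs with h
  · rw [hsum a b ⟨(a.val.1 + b.val.1, a.val.2 * b.val.2), by
      rw [hd.2.2.2.2.1, map_add, a.property.1, b.property.1], by rw [hn, h]; rfl⟩ rfl rfl]
    exact repInt_XX ρ hρ _
  · by_cases h0 : a.val.1 + b.val.1 = 0
    · rw [hzero a b h0, map_zsmul, repInt_iota, smul_zero]
    · rw [hother a b h0 (by omega), map_zero]

theorem commutator_rho (hd : LurieData Λ Vt B p ε)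
    (ρ : Vt →* (Module.End k W)ˣ) (hρ : ρ ε = -1) (a b : Rt Λ Vt B p) :
    ((ρ a.val.2 : (Module.End k W)ˣ) : Module.End k W) * (ρ b.val.2 : (Module.End k W)ˣ) -
      ((ρ b.val.2 : (Module.End k W)ˣ) : Module.End k W) * (ρ a.val.2 : (Module.End k W)ˣ) =
      if B a.val.1 b.val.1 = -1 ∨ B a.val.1 b.val.1 = 1 then
        (2 : k) • ((ρ (a.val.2 * b.val.2) : (Module.End k W)ˣ) : Module.End k W)
      else 0 := by
  have he : ε * ε = 1 := by simpa [pow_two] using hd.2.2.2.2.2.2.2.2.2.1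
  have ha := sq_eq_eps hd a
  have hb := sq_eq_eps hd b
  have hab := mul_sq hd a b
  have hinv : (a.val.2 * b.val.2) * (b.val.2 * a.val.2) = 1 := by
    have hc := hd.2.2.2.2.2.2.2.1 a.val.2
    calc (a.val.2 * b.val.2) * (b.val.2 * a.val.2)
        = a.val.2 * (b.val.2 * b.val.2) * a.val.2 := by group
      _ = 1 := by rw [hb, ← hc, mul_assoc, ha, he]
  split_ifs with h
  · have hε : (a.val.2 * b.val.2) ^ 2 = ε := by
      rw [hab]
      rcases h with h | h <;> rw [h]
      · norm_num
      · norm_num [zpow_ofNat, pow_succ, he]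
    have hba : b.val.2 * a.val.2 = ε * (a.val.2 * b.val.2) := by
      refine mul_left_cancel (a := a.val.2 * b.val.2) ?_
      rw [hinv, ← mul_assoc, ← hd.2.2.2.2.2.2.2.1, mul_assoc, ← pow_two, hε, he]
    rw [← Units.val_mul, ← Units.val_mul, ← map_mul, ← map_mul, hba, rho_eps_mul hρ,
      sub_neg_eq_add, two_smul]
  · have hε : (a.val.2 * b.val.2) ^ 2 = 1 := by
      rw [hab]
      rcases root_pairing hd a.property.2 b.property.2 with ⟨h', -⟩ | ⟨h', -⟩ | h' | h' | h'
      · rw [h']; norm_num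
      · rw [h']; norm_num [zpow_ofNat, pow_succ, he]
      · exact absurd (Or.inl h') h
      · rw [h']; norm_num [zpow_ofNat, pow_succ, he]
      · exact absurd (Or.inr h') h
    have hba : b.val.2 * a.val.2 = a.val.2 * b.val.2 := by
      refine mul_left_cancel (a := a.val.2 * b.val.2) ?_
      rw [hinv, ← pow_two, hε]
    rw [← Units.val_mul, ← Units.val_mul, ← map_mul, ← map_mul, hba, sub_self]

/-- On the elements `Z_γ̃ = X_γ̃ + X_{-γ̃⁻¹}` the map `repInt` is compatible with brackets. -/
theorem repInt_br_Z [CharZero k] (hd : LurieData Λ Vt B p ε)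
    {br : LL Λ Vt B p ε →+ LL Λ Vt B p ε →+ LL Λ Vt B p ε}
    (hbr : IsLurieBracket Λ Vt B p ε br)
    (ρ : Vt →* (Module.End k W)ˣ) (hρ : ρ ε = -1) (a b : Rt Λ Vt B p) :
    repInt ρ hρ (br (XX Λ Vt B p ε a + XX Λ Vt B p ε (dual a))
        (XX Λ Vt B p ε b + XX Λ Vt B p ε (dual b))) =
      repInt ρ hρ (XX Λ Vt B p ε a + XX Λ Vt B p ε (dual a)) *
        repInt ρ hρ (XX Λ Vt B p ε b + XX Λ Vt B p ε (dual b)) -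
      repInt ρ hρ (XX Λ Vt B p ε b + XX Λ Vt B p ε (dual b)) *
        repInt ρ hρ (XX Λ Vt B p ε a + XX Λ Vt B p ε (dual a)) := by
  have hZ : ∀ c : Rt Λ Vt B p, repInt ρ hρ (XX Λ Vt B p ε c + XX Λ Vt B p ε (dual c)) =
      (2 : k)⁻¹ • ((ρ c.val.2 : (Module.End k W)ˣ) : Module.End k W) := by
    intro c
    rw [map_add, repInt_XX, repInt_XX]
    change _ + (4 : k)⁻¹ • ((ρ c.val.2 : (Module.End k W)ˣ) : Module.End k W) = _
    rw [← add_smul]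
    congr 1
    norm_num
  have hcomm := commutator_rho hd ρ hρ a b
  rw [hZ, hZ, smul_mul_smul_comm, smul_mul_smul_comm, ← smul_sub, hcomm]
  simp only [map_add, AddMonoidHom.add_apply, repInt_br hd hbr]
  have e1 : B a.val.1 (dual b).val.1 = -B a.val.1 b.val.1 := by simp [dual]
  have e2 : B (dual a).val.1 b.val.1 = -B a.val.1 b.val.1 := by simp [dual]
  have e3 : B (dual a).val.1 (dual b).val.1 = B a.val.1 b.val.1 := by simp [dual]
  have f : ∀ c : Rt Λ Vt B p, (dual c).val.2 = c.val.2 := fun _ => rfl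
  rw [e1, e2, e3, f, f]
  by_cases h1 : B a.val.1 b.val.1 = -1
  · simp only [h1, if_true, true_or]
    norm_num
    rw [← add_smul, smul_smul]
    congr 1
    norm_num
  by_cases h2 : B a.val.1 b.val.1 = 1
  · simp only [h2, if_true, or_true]
    norm_num
    rw [← add_smul, smul_smul]
    congr 1
    norm_num
  simp [h1, h2]

/-- The `k`-linear extension of `repInt` to `L ⊗ k`. -/
noncomputable def repK (ρ : Vt →* (Module.End k W)ˣ) (hρ : ρ ε = -1) :
    (k ⊗[ℤ] LL Λ Vt B p ε) →ₗ[k] Module.End k W :=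
  LinearMap.liftBaseChange k (repInt (Λ := Λ) (B := B) (p := p) ρ hρ).toIntLinearMap

theorem repK_tmul (ρ : Vt →* (Module.End k W)ˣ) (hρ : ρ ε = -1) (x : LL Λ Vt B p ε) :
    repK ρ hρ ((1 : k) ⊗ₜ[ℤ] x) = repInt ρ hρ x := by
  simp [repK]

/-- `L ⊗ k` is spanned over `k` by the images of `Λ^∨` and of the symbols `X_γ̃`. -/
theorem generators_induction {Q : (k ⊗[ℤ] LL Λ Vt B p ε) → Prop}
    (hadd : ∀ x y, Q x → Q y → Q (x + y)) (hsmul : ∀ (c : k) x, Q x → Q (c • x))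
    (hiota : ∀ f, Q ((1 : k) ⊗ₜ[ℤ] iota Λ Vt B p ε f))
    (hXX : ∀ a, Q ((1 : k) ⊗ₜ[ℤ] XX Λ Vt B p ε a)) (x) : Q x := by
  have hzero : Q 0 := by simpa using hsmul 0 _ (hiota 0)
  have key : ∀ l : LL Λ Vt B p ε, Q ((1 : k) ⊗ₜ[ℤ] l) := by
    rintro ⟨f, q⟩
    have hq : ∀ q : Lp Λ Vt B p ε, Q ((1 : k) ⊗ₜ[ℤ] ((0, q) : LL Λ Vt B p ε)) := by
      intro q
      induction q using QuotientAddGroup.induction_on with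
      | H z =>
        induction z using FreeAbelianGroup.induction_on with
        | zero =>
          change Q ((1 : k) ⊗ₜ[ℤ] (0 : LL Λ Vt B p ε))
          rwa [TensorProduct.tmul_zero]
        | of a => exact hXX a
        | neg a ih =>
          have := hsmul (-1) _ (hXX a)
          rw [neg_one_smul, ← TensorProduct.tmul_neg] at this
          have e : ((0, QuotientAddGroup.mk (-FreeAbelianGroup.of a)) : LL Λ Vt B p ε) =
              -XX Λ Vt B p ε a := Prod.ext (by simp [XX]) rfl
          rwa [e]
        | add u v hu hv =>
          have := hadd _ _ hu hv
          rw [← TensorProduct.tmul_add] at this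
          convert this using 2
          exact Prod.ext (by simp) rfl
    have := hadd _ _ (hiota f) (hq q)
    rw [← TensorProduct.tmul_add] at this
    convert this using 2
    exact Prod.ext (by simp [iota]) (by simp [iota])
  induction x using TensorProduct.induction_on with
  | zero => exact hzero
  | tmul c l =>
    have := hsmul c _ (key l)
    rwa [TensorProduct.smul_tmul', smul_eq_mul, mul_one] at this
  | add u v hu hv => exact hadd _ _ hu hv

end Rep

/-- Let `k` be a field of characteristic `0`, let `𝔤 = {x ∈ L ⊗_ℤ k : σ(x) = x}` be the
fixed-point subalgebra (realized as `ker(σk − id)`, where `σk` is the `k`-linear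
extension of `σ`), let `W` be a finite-dimensional `k`-vector space and
`ρ : Ṽ → GL(W)` a group homomorphism with `ρ(−1) = −id_W`. Then there is a Lie algebra
homomorphism `R : 𝔤 → 𝔤𝔩(W)` with `R(Z_γ̃) = ρ(π(γ̃))/2` for every `γ̃ ∈ Γ̃`, where
`Z_γ̃ = X_γ̃ + X_{−γ̃⁻¹}` and `π : Λ̃ = Λ ×_V Ṽ → Ṽ` is the projection. Here `brk` is
the `k`-bilinear extension of Lurie's bracket to `L ⊗_ℤ k`, and `−γ̃⁻¹` has underlying
pair `(−γ, ε·ṽ⁻¹)` when `γ̃` has underlying pair `(γ, ṽ)` (so `π(γ̃) = ṽ`). -/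
theorem exists_lieHom_of_heisenberg_rep
    (Λ : Type) [AddCommGroup Λ] [Module.Free ℤ Λ] [Module.Finite ℤ Λ]
    (Vt : Type) [Group Vt]
    (B : Λ →ₗ[ℤ] Λ →ₗ[ℤ] ℤ) (p : Vt → ModTwo Λ) (ε : Vt)
    (hdata : LurieData Λ Vt B p ε)
    (br : LL Λ Vt B p ε →+ LL Λ Vt B p ε →+ LL Λ Vt B p ε)
    (hbr : IsLurieBracket Λ Vt B p ε br)
    (σ : LL Λ Vt B p ε →+ LL Λ Vt B p ε) (hσ : IsLurieSigma Λ Vt B p ε σ)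
    (k : Type) [Field k] [CharZero k]
    (brk : (k ⊗[ℤ] LL Λ Vt B p ε) →ₗ[k] (k ⊗[ℤ] LL Λ Vt B p ε) →ₗ[k]
      (k ⊗[ℤ] LL Λ Vt B p ε))
    (hbrk : ∀ x y : LL Λ Vt B p ε,
      brk ((1 : k) ⊗ₜ[ℤ] x) ((1 : k) ⊗ₜ[ℤ] y) = (1 : k) ⊗ₜ[ℤ] br x y)
    (σk : (k ⊗[ℤ] LL Λ Vt B p ε) →ₗ[k] (k ⊗[ℤ] LL Λ Vt B p ε))
    (hσk : ∀ x : LL Λ Vt B p ε, σk ((1 : k) ⊗ₜ[ℤ] x) = (1 : k) ⊗ₜ[ℤ] σ x)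
    (W : Type) [AddCommGroup W] [Module k W] [FiniteDimensional k W]
    (ρ : Vt →* (Module.End k W)ˣ) (hρ : ρ ε = -1) :
    ∃ R : ↥(LinearMap.ker (σk - LinearMap.id)) →ₗ[k] Module.End k W,
      (∀ (x y : ↥(LinearMap.ker (σk - LinearMap.id)))
        (h : brk ↑x ↑y ∈ LinearMap.ker (σk - LinearMap.id)),
        R ⟨brk ↑x ↑y, h⟩ = R x * R y - R y * R x) ∧
      (∀ a b : Rt Λ Vt B p, b.val.1 = -a.val.1 → b.val.2 = ε * a.val.2⁻¹ →
        ∀ h : ((1 : k) ⊗ₜ[ℤ] (XX Λ Vt B p ε a + XX Λ Vt B p ε b) : k ⊗[ℤ] LL Λ Vt B p ε)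
            ∈ LinearMap.ker (σk - LinearMap.id),
        R ⟨(1 : k) ⊗ₜ[ℤ] (XX Λ Vt B p ε a + XX Λ Vt B p ε b), h⟩ =
          (2 : k)⁻¹ • ((ρ a.val.2 : (Module.End k W)ˣ) : Module.End k W)) := by
  -- Fixed points `x` satisfy `x + σ x = 2 x`, so it suffices to treat elements `x + σ x`, which are
  -- `0` or `Z_γ̃` on the generators.
  have hPiota : ∀ f,
      (1 : k) ⊗ₜ[ℤ] iota Λ Vt B p ε f + σk ((1 : k) ⊗ₜ[ℤ] iota Λ Vt B p ε f) = 0 := by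
    intro f
    rw [hσk, hσ.1, TensorProduct.tmul_neg, add_neg_cancel]
  have hPXX : ∀ a, (1 : k) ⊗ₜ[ℤ] XX Λ Vt B p ε a + σk ((1 : k) ⊗ₜ[ℤ] XX Λ Vt B p ε a) =
      (1 : k) ⊗ₜ[ℤ] (XX Λ Vt B p ε a + XX Λ Vt B p ε (dual a)) := by
    intro a
    rw [hσk, hσ.2 a (inv hdata a) rfl rfl, XX_inv, neg_neg, TensorProduct.tmul_add]
  have hP : ∀ x y, repK ρ hρ (brk (x + σk x) (y + σk y)) =
      repK ρ hρ (x + σk x) * repK ρ hρ (y + σk y) -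
        repK ρ hρ (y + σk y) * repK ρ hρ (x + σk x) := by
    intro x y
    induction x using generators_induction with
    | hadd x x' hx hx' =>
      have e : x + x' + σk (x + x') = (x + σk x) + (x' + σk x') := by rw [map_add]; abel
      rw [e, map_add brk (x + σk x), LinearMap.add_apply, map_add (repK ρ hρ) (brk _ _), hx, hx',
        map_add (repK ρ hρ) (x + σk x), add_mul, mul_add]
      abel
    | hsmul c x hx =>
      have e : c • x + σk (c • x) = c • (x + σk x) := by rw [map_smul, smul_add]
      rw [e, map_smul, LinearMap.smul_apply, map_smul, map_smul, hx, smul_mul_assoc,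
        mul_smul_comm, smul_sub]
    | hiota f => rw [hPiota]; simp
    | hXX a =>
      rw [hPXX]
      induction y using generators_induction with
      | hadd y y' hy hy' =>
        have e : y + y' + σk (y + y') = (y + σk y) + (y' + σk y') := by rw [map_add]; abel
        rw [e, map_add (brk _), map_add (repK ρ hρ) (brk _ _), hy, hy',
          map_add (repK ρ hρ) (y + σk y), add_mul, mul_add]
        abel
      | hsmul c y hy =>
        have e : c • y + σk (c • y) = c • (y + σk y) := by rw [map_smul, smul_add]
        rw [e, map_smul, map_smul, map_smul, hy, smul_mul_assoc, mul_smul_comm, smul_sub]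
      | hiota f => rw [hPiota]; simp
      | hXX b =>
        rw [hPXX, hbrk, repK_tmul, repK_tmul, repK_tmul]
        exact repInt_br_Z hdata hbr ρ hρ a b
  refine ⟨(repK ρ hρ).comp (Submodule.subtype _), ?_, ?_⟩
  · rintro ⟨x, hx⟩ ⟨y, hy⟩ h
    have hx' : σk x = x := by simpa [sub_eq_zero] using hx
    have hy' : σk y = y := by simpa [sub_eq_zero] using hy
    have h4 := hP x y
    rw [hx', hy', ← two_smul k x, ← two_smul k y] at h4
    simp only [map_smul, LinearMap.smul_apply, smul_mul_smul_comm, smul_smul] at h4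
    rw [← smul_sub] at h4
    exact smul_right_injective _ (by norm_num : (2 * 2 : k) ≠ 0) h4
  · intro a b _ h2 h
    rw [LinearMap.comp_apply, Submodule.subtype_apply, repK_tmul, map_add, repInt_XX, repInt_XX, h2, eps_mul_inv hdata a, ← add_smul]
    congr 1
    norm_num

end Lurie
end
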